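/- Let X = !![0,1;1,0], Y = !![0,-i;i,0], Z = !![1,0;0,-1], and I the 2×2 identity over ℂ. Let the four generators of the five-qubit code's stabilizer be the Kronecker products G₁ = X⊗Z⊗Z⊗X⊗I, G₂ = I⊗X⊗Z⊗Z⊗X, G₃ = X⊗I⊗X⊗Z⊗Z, G₄ = Z⊗X⊗I⊗X⊗Z. Then for every function f : Fin 5 → Fin 4 (with 0 ↦ I, 1 ↦ X, 2 ↦ Y, 3 ↦ Z) whose support (the set of positions with f ≠ 0) is nonempty and has at most 2 elements, the Kronecker product E determined by f anticommutes with at least one generator: there exists k ∈ Fin 4 with E * Gₖ = -(Gₖ * E). -/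

import Mathlib

open Matrix

noncomputable def X : Matrix (Fin 2) (Fin 2) ℂ := !![0, 1; 1, 0]
noncomputable def Y : Matrix (Fin 2) (Fin 2) ℂ := !![0, -Complex.I; Complex.I, 0]
noncomputable def Z : Matrix (Fin 2) (Fin 2) ℂ := !![1, 0; 0, -1]
noncomputable def I2 : Matrix (Fin 2) (Fin 2) ℂ := 1

/-- The four single-qubit Pauli matrices: `0 ↦ I`, `1 ↦ X`, `2 ↦ Y`, `3 ↦ Z`. -/
noncomputable def pauli : Fin 4 → Matrix (Fin 2) (Fin 2) ℂ := ![I2, X, Y, Z]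

/-- Kronecker product of square matrices, reindexed to `Fin (m * n)`
with lexicographic (big-endian) ordering of the basis. -/
noncomputable def mkron {m n : ℕ} (A : Matrix (Fin m) (Fin m) ℂ)
    (B : Matrix (Fin n) (Fin n) ℂ) : Matrix (Fin (m * n)) (Fin (m * n)) ℂ :=
  Matrix.reindex finProdFinEquiv finProdFinEquiv (Matrix.kroneckerMap (· * ·) A B)

infixl:100 " ⊗ₖ " => mkron

/-- The four generators of the stabilizer of the five-qubit `[5,1,3]` code. -/
noncomputable def fiveQubitGen : Fin 4 → Matrix (Fin 32) (Fin 32) ℂ :=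
  ![X ⊗ₖ Z ⊗ₖ Z ⊗ₖ X ⊗ₖ I2,
    I2 ⊗ₖ X ⊗ₖ Z ⊗ₖ Z ⊗ₖ X,
    X ⊗ₖ I2 ⊗ₖ X ⊗ₖ Z ⊗ₖ Z,
    Z ⊗ₖ X ⊗ₖ I2 ⊗ₖ X ⊗ₖ Z]

theorem mkron_mul_mkron {m n : ℕ} (A A' : Matrix (Fin m) (Fin m) ℂ)
    (B B' : Matrix (Fin n) (Fin n) ℂ) :
    mkron A B * mkron A' B' = mkron (A * A') (B * B') := by
  simp only [mkron, Matrix.reindex_apply, Matrix.submatrix_mul_equiv,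
    Matrix.mul_kronecker_mul]

theorem mkron_zsmul_zsmul {m n : ℕ} (s t : ℤ) (A : Matrix (Fin m) (Fin m) ℂ)
    (B : Matrix (Fin n) (Fin n) ℂ) :
    mkron (s • A) (t • B) = (s * t) • mkron A B := by
  ext i j
  simp only [mkron, Matrix.reindex_apply, Matrix.submatrix_apply, Matrix.kroneckerMap_apply,
    Matrix.smul_apply, smul_mul_smul_comm]

/-- Commutation of two matrices up to a sign is multiplicative under Kronecker products. -/
theorem mkron_mul_comm_of_mul_comm {m n : ℕ} {s t : ℤ} {A A' : Matrix (Fin m) (Fin m) ℂ}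
    {B B' : Matrix (Fin n) (Fin n) ℂ} (hA : A * A' = s • (A' * A)) (hB : B * B' = t • (B' * B)) :
    mkron A B * mkron A' B' = (s * t) • (mkron A' B' * mkron A B) := by
  rw [mkron_mul_mkron, mkron_mul_mkron, hA, hB, mkron_zsmul_zsmul]

/-- The sign by which two single-qubit Pauli matrices commute. -/
def pauliSign (a b : Fin 4) : ℤ := if a = 0 ∨ b = 0 ∨ a = b then 1 else -1

theorem pauli_mul_comm (a b : Fin 4) :
    pauli a * pauli b = pauliSign a b • (pauli b * pauli a) := by
  fin_cases a <;> fin_cases b <;> ext i j <;> fin_cases i <;> fin_cases j <;>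
    simp [pauli, pauliSign, I2, X, Y, Z]

/-- The Pauli labels of the tensor factors of the generators of the five-qubit code. -/
def fiveQubitLabel : Fin 4 → Fin 5 → Fin 4 :=
  ![![1, 3, 3, 1, 0], ![0, 1, 3, 3, 1], ![1, 0, 1, 3, 3], ![3, 1, 0, 1, 3]]

/-- The Kronecker product of the Pauli matrices labelled by `f`. -/
noncomputable def pauliString (f : Fin 5 → Fin 4) : Matrix (Fin 32) (Fin 32) ℂ :=
  pauli (f 0) ⊗ₖ pauli (f 1) ⊗ₖ pauli (f 2) ⊗ₖ pauli (f 3) ⊗ₖ pauli (f 4)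

theorem fiveQubitGen_eq_pauliString (k : Fin 4) :
    fiveQubitGen k = pauliString (fiveQubitLabel k) := by
  fin_cases k <;> rfl

theorem pauliString_mul_comm (f g : Fin 5 → Fin 4) :
    pauliString f * pauliString g =
      (∏ j, pauliSign (f j) (g j)) • (pauliString g * pauliString f) := by
  rw [Fin.prod_univ_five]
  exact mkron_mul_comm_of_mul_comm (mkron_mul_comm_of_mul_comm (mkron_mul_comm_of_mul_comm
    (mkron_mul_comm_of_mul_comm (pauli_mul_comm _ _) (pauli_mul_comm _ _)) (pauli_mul_comm _ _))
    (pauli_mul_comm _ _)) (pauli_mul_comm _ _)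

theorem exists_prod_pauliSign_eq_neg_one : ∀ f : Fin 5 → Fin 4, (∃ j, f j ≠ 0) →
    (Finset.univ.filter fun j => f j ≠ 0).card ≤ 2 →
    ∃ k, ∏ j, pauliSign (f j) (fiveQubitLabel k j) = -1 := by
  decide +kernel

/-- Every nontrivial Pauli operator of weight at most 2 anticommutes with at least one
generator of the five-qubit code's stabilizer. -/
theorem five_qubit_code_weight_two_errors_anticommute (f : Fin 5 → Fin 4)
    (hne : ∃ j, f j ≠ 0)
    (hwt : (Finset.univ.filter fun j => f j ≠ 0).card ≤ 2) :
    ∃ k : Fin 4,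
      (pauli (f 0) ⊗ₖ pauli (f 1) ⊗ₖ pauli (f 2) ⊗ₖ pauli (f 3) ⊗ₖ pauli (f 4)) *
          fiveQubitGen k =
        -(fiveQubitGen k *
          (pauli (f 0) ⊗ₖ pauli (f 1) ⊗ₖ pauli (f 2) ⊗ₖ pauli (f 3) ⊗ₖ pauli (f 4))) := by
  obtain ⟨k, hk⟩ := exists_prod_pauliSign_eq_neg_one f hne hwt
  refine ⟨k, ?_⟩
  have h := pauliString_mul_comm f (fiveQubitLabel k)
  rw [hk, neg_one_zsmul, ← fiveQubitGen_eq_pauliString] at h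
  exact h
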